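/- Let T > 0, (Ω, ℱ, P) a complete probability space with filtration 𝔽 = (ℱ_t)_{t∈[0,T]}, λ Lebesgue measure on [0,T], 𝒢 := {A ∈ ℬ([0,T])⊗ℱ : A_t ∈ ℱ_t for every t ∈ [0,T]}, and ([0,T]×Ω, 𝒢*, μ*) the completion of ([0,T]×Ω, 𝒢, λ×P). Let U ⊆ R^l be a nonempty closed set, ū a 𝒢*-measurable, μ*-square-integrable function with ū(t,ω) ∈ U μ*-a.e., and F : [0,T]×Ω → R^l a ℬ([0,T])⊗ℱ-measurable, 𝔽-adapted process. Then the set 𝒜_ū := {(t,ω) ∈ [0,T]×Ω : ⟨F(t,ω), v⟩ ≥ 0 for all v ∈ T_U(ū(t,ω))} belongs to 𝒢*. -/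

import Mathlib

/-!
The complement of the set in question is the preimage, under `p ↦ (Ff p, ubar p)`, of
`S = {(f, x) : ∃ v ∈ T_U(x), ⟪f, v⟫ < 0}`. This map is a.e.-measurable on the progressive
σ-algebra, so it suffices that `S` is Borel (a priori it is only analytic, as a projection).

The upper limit of `dist(x + h v, U) / h` as `h → 0⁺` is `1`-Lipschitz in `v`, and closed balls
of `ℝ^l` are compact. Hence the existential over `v` may be replaced by the existence, within
a fixed ball and a fixed half-space `⟪f, q⟫ ≤ -ε`, of points `q` of a countable dense set at which
this upper limit is arbitrarily small (`exists_mem_adjacentCone_iff`). Since `dist(x + h q, U)` is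
continuous in `h`, rational `h` suffice, and `S` is built from closed sets by countable unions and
intersections (`measurableSet_exists_mem_adjacentCone`).
-/

open MeasureTheory Filter Set
open scoped ENNReal RealInnerProductSpace

/-- The adjacent cone of a set `K` at a point `x`:
`T_K(x) := {v : lim_{h→0⁺} dist(x+hv, K)/h = 0}`. -/
def adjacentCone {X : Type*} [NormedAddCommGroup X] [NormedSpace ℝ X]
    (K : Set X) (x : X) : Set X :=
  {v | Tendsto (fun h : ℝ => Metric.infDist (x + h • v) K / h)
        (nhdsWithin 0 (Set.Ioi 0)) (nhds 0)}

/-- The progressive σ-algebra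
`𝒢 := {A ∈ ℬ([0,T]) ⊗ ℱ : A_t ∈ ℱ_t for every t ∈ [0,T]}` on `[0,T] × Ω`. -/
def progSigma (T : ℝ) (Ω : Type*) [mΩ : MeasurableSpace Ω]
    (F : ℝ → MeasurableSpace Ω) : MeasurableSpace (Set.Icc (0 : ℝ) T × Ω) where
  MeasurableSet' A := MeasurableSet A ∧
    ∀ t : Set.Icc (0 : ℝ) T, MeasurableSet[F t.1] {ω : Ω | (t, ω) ∈ A}
  measurableSet_empty :=
    ⟨MeasurableSet.empty, fun t => by simp⟩
  measurableSet_compl := fun A hA =>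
    ⟨hA.1.compl, fun t => by
      have : {ω : Ω | (t, ω) ∈ Aᶜ} = {ω : Ω | (t, ω) ∈ A}ᶜ := rfl
      rw [this]; exact (hA.2 t).compl⟩
  measurableSet_iUnion := fun s hs =>
    ⟨MeasurableSet.iUnion fun n => (hs n).1, fun t => by
      have : {ω : Ω | (t, ω) ∈ ⋃ n, s n} = ⋃ n, {ω : Ω | (t, ω) ∈ s n} := by
        ext ω; simp
      rw [this]; exact MeasurableSet.iUnion fun n => (hs n).2 t⟩

lemma progSigma_le (T : ℝ) (Ω : Type*) [mΩ : MeasurableSpace Ω]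
    (F : ℝ → MeasurableSpace Ω) :
    progSigma T Ω F ≤ (inferInstance : MeasurableSpace (Set.Icc (0 : ℝ) T × Ω)) :=
  fun _ hA => hA.1

/-- Lebesgue measure on `[0, T]`, viewed as a subtype of `ℝ`. -/
noncomputable def lebIcc (T : ℝ) : Measure (Set.Icc (0 : ℝ) T) :=
  Measure.comap Subtype.val volume

/-- The measure `λ × P`, regarded as a measure on the progressive σ-algebra `𝒢`. -/
noncomputable def nuG (T : ℝ) (Ω : Type*) [mΩ : MeasurableSpace Ω]
    (F : ℝ → MeasurableSpace Ω) (P : Measure Ω) :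
    @Measure (Set.Icc (0 : ℝ) T × Ω) (progSigma T Ω F) :=
  ((lebIcc T).prod P).trim (progSigma_le T Ω F)

/-- The completion `𝒮*` of a σ-algebra `𝒮` under a measure `μ`: all sets `A` with
`E ⊆ A ⊆ F`, `E, F ∈ 𝒮` and `μ(F \ E) = 0`. -/
def completionSets {α : Type*} (m : MeasurableSpace α) (μ : @Measure α m) :
    Set (Set α) :=
  {A : Set α | ∃ E F : Set α, MeasurableSet[m] E ∧ MeasurableSet[m] F ∧
    E ⊆ A ∧ A ⊆ F ∧ μ (F \ E) = 0}

/-- A function on `[0,T] × Ω` is `𝒢*`-measurable if preimages of Borel sets belong to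
the completion `𝒢*` of `𝒢` under `λ × P`. -/
def starMeasurable (T : ℝ) (Ω : Type*) [mΩ : MeasurableSpace Ω]
    (F : ℝ → MeasurableSpace Ω) (P : Measure Ω) {l : ℕ}
    (u : Set.Icc (0 : ℝ) T × Ω → EuclideanSpace ℝ (Fin l)) : Prop :=
  ∀ B : Set (EuclideanSpace ℝ (Fin l)), MeasurableSet B →
    u ⁻¹' B ∈ completionSets (progSigma T Ω F) (nuG T Ω F P)

/-- The space `ℒ²_𝔽(0,T;ℝ^l)` of `𝒢*`-measurable, `μ*`-square-integrable functions. -/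
def L2Star (T : ℝ) (Ω : Type*) [mΩ : MeasurableSpace Ω]
    (F : ℝ → MeasurableSpace Ω) (P : Measure Ω) (l : ℕ) :
    Set (Set.Icc (0 : ℝ) T × Ω → EuclideanSpace ℝ (Fin l)) :=
  {v | starMeasurable T Ω F P v ∧ eLpNorm v 2 (nuG T Ω F P) < ⊤}

/-- The admissible set `𝒰*_ad := {u ∈ ℒ²_𝔽 : u(t,ω) ∈ U, μ*-a.e.}`. -/
def UadStar (T : ℝ) (Ω : Type*) [mΩ : MeasurableSpace Ω]
    (F : ℝ → MeasurableSpace Ω) (P : Measure Ω) {l : ℕ}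
    (U : Set (EuclideanSpace ℝ (Fin l))) :
    Set (Set.Icc (0 : ℝ) T × Ω → EuclideanSpace ℝ (Fin l)) :=
  {u ∈ L2Star T Ω F P l | ∀ᵐ p ∂(nuG T Ω F P), u p ∈ U}

/-- The adjacent cone, at `u`, of a subset `S` of a function space `W`, with respect
to the `L²(μ)`-distance: `{v ∈ W : lim_{h→0⁺} dist_{L²}(u + h v, S)/h = 0}`. -/
def adjacentConeL2 {α E : Type*} {mα : MeasurableSpace α} (μ : Measure α)
    [NormedAddCommGroup E] [NormedSpace ℝ E]
    (W S : Set (α → E)) (u : α → E) : Set (α → E) :=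
  {v ∈ W | Tendsto
    (fun h : ℝ =>
      (⨅ g ∈ S, eLpNorm (fun p => (u p + h • v p) - g p) 2 μ) / ENNReal.ofReal h)
    (nhdsWithin 0 (Set.Ioi 0)) (nhds 0)}

/-- The inequality `dist(x + h v, K) ≤ c h` holds for all `0 < h < 1 / (m + 1)`. Its validity for
some `m` bounds the upper limit of `dist(x + h v, K) / h` as `h → 0⁺` by `c`. -/
def distBoundOn {X : Type*} [NormedAddCommGroup X] [NormedSpace ℝ X]
    (K : Set X) (x v : X) (c : ℝ) (m : ℕ) : Prop :=
  ∀ h : ℝ, 0 < h → h < 1 / ((m : ℝ) + 1) → Metric.infDist (x + h • v) K ≤ c * h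

section Cone

variable {X : Type*} [NormedAddCommGroup X] [NormedSpace ℝ X]

lemma mem_adjacentCone_iff (K : Set X) (x v : X) :
    v ∈ adjacentCone K x ↔ ∀ c : ℝ, 0 < c → ∃ m : ℕ, distBoundOn K x v c m := by
  simp only [adjacentCone, mem_setOf_eq, Metric.tendsto_nhdsWithin_nhds]
  constructor
  · intro H c hc
    obtain ⟨δ, hδ, H⟩ := H c hc
    obtain ⟨m, hm⟩ := exists_nat_one_div_lt hδ
    refine ⟨m, fun h h0 h1 => ?_⟩
    have h2 := H (x := h) h0 (by
      rw [dist_zero_right, Real.norm_of_nonneg h0.le]; exact h1.trans hm)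
    rw [dist_zero_right] at h2
    have h3 := (le_abs_self _).trans h2.le
    rwa [div_le_iff₀ h0] at h3
  · intro H c hc
    obtain ⟨m, hm⟩ := H (c / 2) (half_pos hc)
    refine ⟨1 / ((m : ℝ) + 1), by positivity, fun {h} h0 h1 => ?_⟩
    have h0' : 0 < h := h0
    rw [dist_zero_right, Real.norm_of_nonneg h0'.le] at h1
    rw [dist_zero_right, Real.norm_of_nonneg (div_nonneg Metric.infDist_nonneg h0'.le)]
    have := hm h h0' h1
    rw [div_lt_iff₀ h0']
    nlinarith

/-- Lipschitz dependence on the direction: moving `v` to `w` costs at most `‖v - w‖`. -/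
lemma distBoundOn.of_norm_sub_le {K : Set X} {x v w : X} {c d : ℝ} {m : ℕ}
    (H : distBoundOn K x v c m) (hvw : ‖v - w‖ ≤ d) : distBoundOn K x w (c + d) m := by
  intro h h0 h1
  have h2 := H h h0 h1
  have h3 := Metric.infDist_le_infDist_add_dist (s := K) (x := x + h • w) (y := x + h • v)
  have h4 : dist (x + h • w) (x + h • v) ≤ d * h := by
    rw [dist_add_left, dist_comm, dist_eq_norm, ← smul_sub, norm_smul,
      Real.norm_of_nonneg h0.le, mul_comm]
    gcongr
  linarith

/-- By continuity in `h` it is enough to test rational `h`. -/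
lemma distBoundOn_iff_rat (K : Set X) (x v : X) (c : ℝ) (m : ℕ) :
    distBoundOn K x v c m ↔ ∀ r : ℚ, 0 < (r : ℝ) → (r : ℝ) < 1 / ((m : ℝ) + 1) →
      Metric.infDist (x + (r : ℝ) • v) K ≤ c * r := by
  refine ⟨fun H r => H r, fun H h h0 h1 => ?_⟩
  have hcl : IsClosed {h : ℝ | Metric.infDist (x + h • v) K ≤ c * h} :=
    isClosed_le ((Metric.continuous_infDist_pt K).comp (by fun_prop)) (by fun_prop)
  have hden : h ∈ closure (Ioo 0 (1 / ((m : ℝ) + 1)) ∩ range ((↑) : ℚ → ℝ)) :=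
    Rat.denseRange_cast.open_subset_closure_inter isOpen_Ioo ⟨h0, h1⟩
  refine closure_minimal ?_ hcl hden
  rintro _ ⟨⟨a, b⟩, r, rfl⟩
  exact H r a b

end Cone

/-- The existence of a direction of the adjacent cone in the open half-space `⟪f, ·⟫ < 0`,
expressed with countably many quantifiers. -/
lemma exists_mem_adjacentCone_iff {X : Type*} [NormedAddCommGroup X] [InnerProductSpace ℝ X]
    [ProperSpace X] (K : Set X) {d : ℕ → X} (hd : DenseRange d) (f x : X) :
    (∃ v ∈ adjacentCone K x, ⟪f, v⟫ < 0) ↔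
      ∃ n : ℕ, ∀ k : ℕ, ∃ i : ℕ, ‖d i‖ ≤ n ∧ ⟪f, d i⟫ ≤ -(1 / ((n : ℝ) + 1)) ∧
        ∃ m : ℕ, distBoundOn K x (d i) (1 / ((k : ℝ) + 1)) m := by
  constructor
  · rintro ⟨v, hv, hfv⟩
    rw [mem_adjacentCone_iff] at hv
    obtain ⟨n₁, hn₁⟩ := exists_nat_gt ‖v‖
    obtain ⟨n₂, hn₂⟩ := exists_nat_one_div_lt (neg_pos.2 hfv)
    set n := max n₁ n₂
    have hn1 : ‖v‖ < n := hn₁.trans_le (by exact_mod_cast le_max_left _ _)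
    have hn2 : 1 / ((n : ℝ) + 1) < -⟪f, v⟫ := by
      refine lt_of_le_of_lt ?_ hn₂
      have : (n₂ : ℝ) ≤ n := by exact_mod_cast le_max_right _ _
      gcongr
    refine ⟨n, fun k => ?_⟩
    have hk : (0 : ℝ) < 1 / ((k : ℝ) + 1) / 2 := by positivity
    -- the strict versions of the constraints cut out an open neighbourhood of `v`
    have ho : IsOpen {w : X | ‖w‖ < n ∧ ⟪f, w⟫ < -(1 / ((n : ℝ) + 1)) ∧
        ‖v - w‖ < 1 / ((k : ℝ) + 1) / 2} := by
      have o1 : IsOpen {w : X | ‖w‖ < n} := isOpen_lt (by fun_prop) (by fun_prop)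
      have o2 : IsOpen {w : X | ⟪f, w⟫ < -(1 / ((n : ℝ) + 1))} :=
        isOpen_lt (by fun_prop) (by fun_prop)
      have o3 : IsOpen {w : X | ‖v - w‖ < 1 / ((k : ℝ) + 1) / 2} :=
        isOpen_lt (by fun_prop) (by fun_prop)
      exact o1.inter (o2.inter o3)
    obtain ⟨i, h1, h2, h3⟩ := hd.exists_mem_open ho ⟨v, hn1, by linarith, by simpa using hk⟩
    obtain ⟨m, hm⟩ := hv _ hk
    refine ⟨i, h1.le, h2.le, m, ?_⟩
    have := hm.of_norm_sub_le h3.le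
    rwa [add_halves] at this
  · rintro ⟨n, H⟩
    choose i h1 h2 m hm using H
    obtain ⟨v, -, φ, hφ, hlim⟩ := (isCompact_closedBall (0 : X) n).tendsto_subseq
      (x := fun k => d (i k)) (fun k => by simpa using h1 k)
    refine ⟨v, ?_, ?_⟩
    · rw [mem_adjacentCone_iff]
      intro c hc
      have e1 : ∀ᶠ k in atTop, ‖d (i (φ k)) - v‖ < c / 2 := by
        have := (Metric.tendsto_nhds.1 hlim) (c / 2) (half_pos hc)
        simpa [dist_eq_norm] using this
      have e2 : ∀ᶠ k in atTop, 1 / ((φ k : ℝ) + 1) < c / 2 :=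
        (tendsto_one_div_add_atTop_nhds_zero_nat.comp hφ.tendsto_atTop).eventually
          (gt_mem_nhds (half_pos hc))
      obtain ⟨k, hk1, hk2⟩ := (e1.and e2).exists
      refine ⟨m (φ k), fun h h0 hh => ?_⟩
      have := (hm (φ k)).of_norm_sub_le hk1.le h h0 hh
      nlinarith
    · have h3 : ⟪f, v⟫ ≤ -(1 / ((n : ℝ) + 1)) :=
        le_of_tendsto (tendsto_const_nhds.inner hlim) (Eventually.of_forall fun k => h2 (φ k))
      have : (0 : ℝ) < 1 / ((n : ℝ) + 1) := by positivity
      linarith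

lemma measurableSet_exists_mem_adjacentCone {l : ℕ} (U : Set (EuclideanSpace ℝ (Fin l))) :
    MeasurableSet {z : EuclideanSpace ℝ (Fin l) × EuclideanSpace ℝ (Fin l) |
      ∃ v ∈ adjacentCone U z.2, ⟪z.1, v⟫ < 0} := by
  obtain ⟨d, hd⟩ := TopologicalSpace.exists_dense_seq (EuclideanSpace ℝ (Fin l))
  simp only [exists_mem_adjacentCone_iff U hd, distBoundOn_iff_rat]
  simp only [Set.ofPred_exists, Set.ofPred_forall, Set.ofPred_and]
  refine .iUnion fun n => .iInter fun k => .iUnion fun i => ?_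
  refine (MeasurableSet.const _).inter (.inter ?_ (.iUnion fun m => .iInter fun r => .iInter
    fun _ => .iInter fun _ => ?_))
  · exact (isClosed_le (by fun_prop) (by fun_prop)).measurableSet
  · exact (isClosed_le ((Metric.continuous_infDist_pt U).comp (by fun_prop))
      (by fun_prop)).measurableSet

/-- Null-measurable sets are exactly those of the completion. -/
lemma mem_completionSets_iff {α : Type*} {m : MeasurableSpace α} (μ : Measure α) (A : Set α) :
    A ∈ completionSets m μ ↔ NullMeasurableSet A μ := by
  constructor
  · rintro ⟨E, G, hE, hG, hEA, hAG, h0⟩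
    refine hE.nullMeasurableSet.congr (hEA.eventuallyLE.antisymm ?_)
    exact ae_le_set.2 (measure_mono_null (sdiff_subset_sdiff_left hAG) h0)
  · intro hA
    obtain ⟨E, hEA, hE, hE'⟩ := hA.exists_measurable_subset_ae_eq
    obtain ⟨G, hAG, hG, hG'⟩ := hA.exists_measurable_superset_ae_eq
    exact ⟨E, G, hE, hG, hEA, hAG, ae_le_set.1 (hG'.trans hE'.symm).le⟩

/-- The set `𝒜_ū := {(t,ω) : ⟨F(t,ω), v⟩ ≥ 0 for all v ∈ T_U(ū(t,ω))}` belongs to the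
completion `𝒢*` of the progressive σ-algebra `𝒢` under `λ × P`. -/
theorem goodSet_mem_completion
    (T : ℝ) (hT : 0 < T) {Ω : Type*} [mΩ : MeasurableSpace Ω]
    (P : Measure Ω) [IsProbabilityMeasure P] (hPc : P.IsComplete)
    (F : ℝ → MeasurableSpace Ω)
    (hFle : ∀ t : ℝ, F t ≤ mΩ)
    (hFmono : ∀ s t : ℝ, s ≤ t → F s ≤ F t)
    {l : ℕ} (U : Set (EuclideanSpace ℝ (Fin l))) (hUcl : IsClosed U)
    (hUne : U.Nonempty)
    (ubar : Set.Icc (0 : ℝ) T × Ω → EuclideanSpace ℝ (Fin l))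
    (hubarMeas : starMeasurable T Ω F P ubar)
    (hubarInt : eLpNorm ubar 2 (nuG T Ω F P) < ⊤)
    (hubarU : ∀ᵐ p ∂(nuG T Ω F P), ubar p ∈ U)
    (Ff : Set.Icc (0 : ℝ) T × Ω → EuclideanSpace ℝ (Fin l))
    (hFfmeas : Measurable Ff)
    (hFfadapted : ∀ t : Set.Icc (0 : ℝ) T,
      Measurable[F t.1] fun ω : Ω => Ff (t, ω)) :
    {p : Set.Icc (0 : ℝ) T × Ω | ∀ v ∈ adjacentCone U (ubar p), 0 ≤ ⟪Ff p, v⟫} ∈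
      completionSets (progSigma T Ω F) (nuG T Ω F P) := by
  have hF : Measurable[progSigma T Ω F] Ff := fun B hB =>
    ⟨hFfmeas hB, fun t => hFfadapted t hB⟩
  have hu : @NullMeasurable _ _ (progSigma T Ω F) _ ubar (nuG T Ω F P) := fun B hB =>
    (mem_completionSets_iff _ _).1 (hubarMeas B hB)
  rw [mem_completionSets_iff]
  have hpair := (hF.aemeasurable (μ := nuG T Ω F P)).prodMk hu.aemeasurable
  convert hpair.nullMeasurable (measurableSet_exists_mem_adjacentCone U).compl using 1
  ext p
  simp
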